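/- Universal approximation under the action of an unbounded operator, compact version (Theorem UAT_L(i)): let v ∈ C²(H) be such that Dv(x) ∈ D(L) for every x ∈ H and the map x ↦ L Dv(x) is continuous from H to H. Let K, K' ⊆ H be compact and assume the consistency condition sup_{x∈K} |⟨L(Dv(x) − P_d Dv(P_d x)), x⟩| → 0 as d → ∞. Then for every ε > 0 there exist d ∈ ℕ and f ∈ 𝒩_d such that the cylindrical function w_f satisfies sup_{x∈K} |v(x) − w_f(x)| < ε, sup_{x∈K} ‖Dv(x) − Dw_f(x)‖ < ε, sup_{x∈K, h∈K'} ‖(D²v(x) − D²w_f(x)) h‖ < ε, and in addition sup_{x∈K} |⟨L(Dv(x) − Dw_f(x)), x⟩| < ε. -/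

import Mathlib

open Filter Topology
open scoped RealInnerProductSpace

/-- The coordinate map `x ↦ (⟪e 0, x⟫, …, ⟪e (d-1), x⟫)` of a Hilbert space with respect to the
first `d` elements of a sequence `e`. -/
noncomputable def euclCoord {H : Type*} [NormedAddCommGroup H] [InnerProductSpace ℝ H]
    (e : ℕ → H) (d : ℕ) (x : H) : EuclideanSpace ℝ (Fin d) :=
  WithLp.toLp 2 fun i : Fin d => ⟪e i, x⟫

/-- The cylindrical function (Hilbert–Galerkin Neural Operator) with inner network `f`. -/
noncomputable def cyl {H : Type*} [NormedAddCommGroup H] [InnerProductSpace ℝ H]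
    (e : ℕ → H) {d : ℕ} (f : EuclideanSpace ℝ (Fin d) → ℝ) (x : H) : ℝ :=
  f (euclCoord e d x)

/-!
The Galerkin projection `P_d` factors as `J_d ∘ A_d`, where `A_d : H → ℝ^d` reads off coordinates
and `J_d` is the adjoint of `A_d`, so `v ∘ P_d` is the cylindrical function of `v ∘ J_d`.
Since `P_d → id` strongly with `‖P_d‖ ≤ 1`, also `P_d x_d → x` whenever `x_d → x`; hence `v ∘ P_d`,
its gradient `P_d (∇v (P_d x))` and its Hessian `(x, h) ↦ P_d (D²v (P_d x) (P_d h))` converge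
uniformly on compact sets, while the consistency condition is exactly convergence of the term
containing `L`.
For fixed `d`, pulling back along `A_d` turns `C²` closeness on `ℝ^d` into closeness on `H`: the
difference of the two gradients lies in the finite-dimensional range of `J_d`, on which `L` is
bounded.
-/

section Gradient

open scoped Gradient

theorem gradient_comp_continuousLinearMap {𝕜 E F : Type*} [RCLike 𝕜]
    [NormedAddCommGroup E] [InnerProductSpace 𝕜 E] [CompleteSpace E]
    [NormedAddCommGroup F] [InnerProductSpace 𝕜 F] [CompleteSpace F]
    {g : F → 𝕜} {x : E} (A : E →L[𝕜] F) (hg : DifferentiableAt 𝕜 g (A x)) :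
    ∇ (g ∘ A) x = A.adjoint (∇ g (A x)) := by
  refine HasGradientAt.gradient ?_
  rw [hasGradientAt_iff_hasFDerivAt]
  refine (hg.hasGradientAt.hasFDerivAt.comp x A.hasFDerivAt).congr_fderiv ?_
  ext k
  simp [ContinuousLinearMap.adjoint_inner_left]

variable {E F : Type*} [NormedAddCommGroup E] [InnerProductSpace ℝ E] [CompleteSpace E]
  [NormedAddCommGroup F] [InnerProductSpace ℝ F] [CompleteSpace F]

theorem contDiff_gradient {g : F → ℝ} {m n : WithTop ℕ∞} (hg : ContDiff ℝ n g) (hmn : m + 1 ≤ n) :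
    ContDiff ℝ m (∇ g) :=
  (InnerProductSpace.toDual ℝ F).symm.toContinuousLinearEquiv.contDiff.comp (hg.fderiv_right hmn)

theorem fderiv_gradient_comp_continuousLinearMap {g : F → ℝ} {x : E} (A : E →L[ℝ] F)
    (hg : Differentiable ℝ g) (hg' : DifferentiableAt ℝ (∇ g) (A x)) :
    fderiv ℝ (∇ (g ∘ A)) x = A.adjoint ∘L fderiv ℝ (∇ g) (A x) ∘L A := by
  have hgrad : ∇ (g ∘ A) = A.adjoint ∘ ∇ g ∘ A :=
    funext fun y => gradient_comp_continuousLinearMap A (hg (A y))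
  rw [hgrad]
  exact (A.adjoint.hasFDerivAt.comp x (hg'.hasFDerivAt.comp x A.hasFDerivAt)).fderiv

end Gradient

theorem tendstoUniformlyOn_of_forall_tendsto {ι X α : Type*} [TopologicalSpace X] [UniformSpace α]
    {l : Filter ι} {K : Set X} {F : ι → X → α} {f : X → α} (hK : IsCompact K)
    (hf : ContinuousOn f K)
    (hF : ∀ x ∈ K, Tendsto (fun q : ι × X => F q.1 q.2) (l ×ˢ 𝓝[K] x) (𝓝 (f x))) :
    TendstoUniformlyOn F f l K := by
  rw [← tendstoLocallyUniformlyOn_iff_tendstoUniformlyOn_of_compact hK,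
    tendstoLocallyUniformlyOn_iff_forall_tendsto]
  intro x hx
  have hfst : Tendsto (fun q : ι × X => f q.2) (l ×ˢ 𝓝[K] x) (𝓝 (f x)) :=
    (hf x hx).tendsto.comp tendsto_snd
  exact (hfst.prodMk_nhds (hF x hx)).mono_right (nhds_le_uniformity _)

theorem tendsto_apply_of_norm_le {ι α 𝕜 E F : Type*} [NontriviallyNormedField 𝕜]
    [SeminormedAddCommGroup E] [NormedSpace 𝕜 E] [SeminormedAddCommGroup F] [NormedSpace 𝕜 F]
    {T : ι → E →L[𝕜] F} {C : ℝ} {l : Filter ι} {m : Filter α} {i : α → ι} {y : α → E}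
    {x : E} {z : F} (hbdd : ∀ j, ‖T j‖ ≤ C) (hlim : Tendsto (T · x) l (𝓝 z))
    (hi : Tendsto i m l) (hy : Tendsto y m (𝓝 x)) :
    Tendsto (fun a => T (i a) (y a)) m (𝓝 z) := by
  have hdiff : Tendsto (fun a => T (i a) (y a - x)) m (𝓝 0) := by
    refine squeeze_zero_norm (fun a => (T (i a)).le_of_opNorm_le (hbdd _) _) ?_
    simpa using (tendsto_iff_norm_sub_tendsto_zero.1 hy).const_mul C
  simpa using hdiff.add (hlim.comp hi)

section StronglyConvergent

open scoped Gradient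

variable {H : Type*} [NormedAddCommGroup H] [InnerProductSpace ℝ H]
  {ι : Type*} {l : Filter ι} {P : ι → H →L[ℝ] H} {C : ℝ} {K K' : Set H}

theorem tendstoUniformlyOn_comp_of_norm_le {α : Type*} [UniformSpace α] {v : H → α}
    (hbdd : ∀ i, ‖P i‖ ≤ C) (hlim : ∀ x, Tendsto (P · x) l (𝓝 x)) (hv : Continuous v)
    (hK : IsCompact K) : TendstoUniformlyOn (fun i => v ∘ P i) v l K :=
  tendstoUniformlyOn_of_forall_tendsto hK hv.continuousOn fun x _ =>
    (hv.tendsto x).comp <| tendsto_apply_of_norm_le hbdd (hlim x) tendsto_fst <|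
      tendsto_snd.mono_right nhdsWithin_le_nhds

variable [CompleteSpace H] {v : H → ℝ}

theorem tendstoUniformlyOn_gradient_comp (hself : ∀ i, IsSelfAdjoint (P i))
    (hbdd : ∀ i, ‖P i‖ ≤ C) (hlim : ∀ x, Tendsto (P · x) l (𝓝 x)) (hv : ContDiff ℝ 1 v)
    (hK : IsCompact K) : TendstoUniformlyOn (fun i => ∇ (v ∘ P i)) (∇ v) l K := by
  have hgrad : Continuous (∇ v) := (contDiff_gradient (m := 0) hv (by norm_num)).continuous
  refine tendstoUniformlyOn_of_forall_tendsto hK hgrad.continuousOn fun x _ => ?_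
  have hsnd : Tendsto Prod.snd (l ×ˢ 𝓝[K] x) (𝓝 x) := tendsto_snd.mono_right nhdsWithin_le_nhds
  simp only [gradient_comp_continuousLinearMap _ (hv.differentiable one_ne_zero _),
    (hself _).adjoint_eq]
  exact tendsto_apply_of_norm_le hbdd (hlim _) tendsto_fst <|
    (hgrad.tendsto x).comp (tendsto_apply_of_norm_le hbdd (hlim x) tendsto_fst hsnd)

theorem tendstoUniformlyOn_fderiv_gradient_comp (hself : ∀ i, IsSelfAdjoint (P i))
    (hbdd : ∀ i, ‖P i‖ ≤ C) (hlim : ∀ x, Tendsto (P · x) l (𝓝 x)) (hv : ContDiff ℝ 2 v)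
    (hK : IsCompact K) (hK' : IsCompact K') :
    TendstoUniformlyOn (fun i (z : H × H) => fderiv ℝ (∇ (v ∘ P i)) z.1 z.2)
      (fun z => fderiv ℝ (∇ v) z.1 z.2) l (K ×ˢ K') := by
  have hgrad : ContDiff ℝ 1 (∇ v) := contDiff_gradient hv one_add_one_eq_two.le
  have hhess : Continuous fun z : H × H => fderiv ℝ (∇ v) z.1 z.2 :=
    hgrad.continuous_fderiv_apply one_ne_zero
  refine tendstoUniformlyOn_of_forall_tendsto (hK.prod hK') hhess.continuousOn fun z _ => ?_
  have hsnd : Tendsto Prod.snd (l ×ˢ 𝓝[K ×ˢ K'] z) (𝓝 z) :=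
    tendsto_snd.mono_right nhdsWithin_le_nhds
  simp only [fderiv_gradient_comp_continuousLinearMap _ (hv.differentiable two_ne_zero)
    (hgrad.differentiable one_ne_zero _), (hself _).adjoint_eq, ContinuousLinearMap.comp_apply]
  have hpoint := tendsto_apply_of_norm_le hbdd (hlim z.1) tendsto_fst hsnd.fst_nhds
  have hdirection := tendsto_apply_of_norm_le hbdd (hlim z.2) tendsto_fst hsnd.snd_nhds
  exact tendsto_apply_of_norm_le hbdd (hlim _) tendsto_fst <|
    (hhess.tendsto z).comp (hpoint.prodMk_nhds hdirection)

end StronglyConvergent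

section Closeness

open scoped Gradient

variable {H : Type*} [NormedAddCommGroup H] [InnerProductSpace ℝ H] [CompleteSpace H]

/-- `C2CloseOn L K K' ε u w` says that `u` and `w` are `ε`-close in the sense in which the theorem
approximates: uniformly on `K` in value, in gradient, in the Hessian applied to directions from
`K'`, and in the first-order term `⟪L (∇ u x), x⟫`. That term compares `L` of the difference of the
gradients, as in the paper. -/
structure C2CloseOn (L : H →ₗ[ℝ] H) (K K' : Set H) (ε : ℝ) (u w : H → ℝ) : Prop where
  value : ∀ x ∈ K, |u x - w x| < ε
  grad : ∀ x ∈ K, ‖∇ u x - ∇ w x‖ < ε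
  hess : ∀ x ∈ K, ∀ h ∈ K', ‖fderiv ℝ (∇ u) x h - fderiv ℝ (∇ w) x h‖ < ε
  drift : ∀ x ∈ K, |⟪L (∇ u x - ∇ w x), x⟫| < ε

variable {L : H →ₗ[ℝ] H} {K K' : Set H} {ε : ℝ}

theorem C2CloseOn.trans {ε₁ ε₂ : ℝ} {u v w : H → ℝ} (huv : C2CloseOn L K K' ε₁ u v)
    (hvw : C2CloseOn L K K' ε₂ v w) : C2CloseOn L K K' (ε₁ + ε₂) u w where
  value x hx := (abs_sub_le _ _ _).trans_lt (add_lt_add (huv.value x hx) (hvw.value x hx))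
  grad x hx := (norm_sub_le_norm_sub_add_norm_sub _ _ _).trans_lt
    (add_lt_add (huv.grad x hx) (hvw.grad x hx))
  hess x hx h hh := (norm_sub_le_norm_sub_add_norm_sub _ _ _).trans_lt
    (add_lt_add (huv.hess x hx h hh) (hvw.hess x hx h hh))
  drift x hx := by
    rw [← sub_add_sub_cancel (∇ u x) (∇ v x), map_add, inner_add_left]
    exact (abs_add_le _ _).trans_lt (add_lt_add (huv.drift x hx) (hvw.drift x hx))

theorem eventually_c2CloseOn_comp {ι : Type*} {l : Filter ι} {P : ι → H →L[ℝ] H} {C : ℝ}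
    {v : H → ℝ} (hself : ∀ i, IsSelfAdjoint (P i)) (hbdd : ∀ i, ‖P i‖ ≤ C)
    (hlim : ∀ x, Tendsto (P · x) l (𝓝 x)) (hv : ContDiff ℝ 2 v)
    (hK : IsCompact K) (hK' : IsCompact K') (hε : 0 < ε)
    (hdrift : ∀ᶠ i in l, ∀ x ∈ K, |⟪L (∇ v x - P i (∇ v (P i x))), x⟫| < ε) :
    ∀ᶠ i in l, C2CloseOn L K K' ε v (v ∘ P i) := by
  have hvalue := tendstoUniformlyOn_comp_of_norm_le hbdd hlim hv.continuous hK
  have hgrad := tendstoUniformlyOn_gradient_comp hself hbdd hlim (hv.of_le one_le_two) hK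
  have hhess := tendstoUniformlyOn_fderiv_gradient_comp hself hbdd hlim hv hK hK'
  rw [Metric.tendstoUniformlyOn_iff] at hvalue hgrad hhess
  filter_upwards [hvalue ε hε, hgrad ε hε, hhess ε hε, hdrift] with i h₀ h₁ h₂ hL
  simp only [dist_eq_norm] at h₀ h₁ h₂
  refine ⟨h₀, h₁, fun x hx h hh => h₂ (x, h) ⟨hx, hh⟩, fun x hx => ?_⟩
  rw [gradient_comp_continuousLinearMap _ (hv.differentiable two_ne_zero _), (hself i).adjoint_eq]
  exact hL x hx

theorem exists_pos_c2CloseOn_comp {F : Type*} [NormedAddCommGroup F] [InnerProductSpace ℝ F]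
    [FiniteDimensional ℝ F] [CompleteSpace F] (L : H →ₗ[ℝ] H) (A : H →L[ℝ] F)
    (hK : Bornology.IsBounded K) (hK' : Bornology.IsBounded K') (hε : 0 < ε) :
    ∃ δ > 0, ∀ g f : F → ℝ, ContDiff ℝ 2 g → ContDiff ℝ 2 f →
      (∀ y ∈ A '' K, |g y - f y| < δ) → (∀ y ∈ A '' K, ‖∇ g y - ∇ f y‖ < δ) →
      (∀ y ∈ A '' K, ‖fderiv ℝ (∇ g) y - fderiv ℝ (∇ f) y‖ < δ) →
      C2CloseOn L K K' ε (g ∘ A) (f ∘ A) := by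
  obtain ⟨R, hR⟩ := hK.exists_norm_le
  obtain ⟨R', hR'⟩ := (A.lipschitz.isBounded_image hK').exists_norm_le
  let LJ : F →L[ℝ] H := (L ∘ₗ A.adjoint.toLinearMap).toContinuousLinearMap
  have hsmall (c : ℝ) : ∀ᶠ δ in 𝓝[>] (0 : ℝ), c * δ < ε :=
    (Continuous.tendsto' (by fun_prop) 0 0 (mul_zero c)).mono_left nhdsWithin_le_nhds
      |>.eventually_lt_const hε
  obtain ⟨δ, hδ₀, hδ₁, hδ₂, hδL, hδ⟩ := ((hsmall 1).and <| (hsmall ‖A.adjoint‖).and <|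
    (hsmall (‖A.adjoint‖ * R')).and <| (hsmall (‖LJ‖ * R)).and self_mem_nhdsWithin).exists
  refine ⟨δ, hδ, fun g f hg hf h₀ h₁ h₂ => ?_⟩
  have hgrad {u : F → ℝ} (hu : ContDiff ℝ 2 u) (x : H) :=
    gradient_comp_continuousLinearMap (x := x) A (hu.differentiable two_ne_zero _)
  have hhess {u : F → ℝ} (hu : ContDiff ℝ 2 u) (x : H) :=
    fderiv_gradient_comp_continuousLinearMap (x := x) A (hu.differentiable two_ne_zero)
      ((contDiff_gradient hu one_add_one_eq_two.le).differentiable one_ne_zero _)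
  refine ⟨fun x hx => ?_, fun x hx => ?_, fun x hx h hh => ?_, fun x hx => ?_⟩
  · exact (h₀ _ ⟨x, hx, rfl⟩).trans (by linarith)
  · rw [hgrad hg, hgrad hf, ← map_sub]
    exact (A.adjoint.le_opNorm_of_le (h₁ _ ⟨x, hx, rfl⟩).le).trans_lt hδ₁
  · rw [hhess hg, hhess hf]
    calc ‖A.adjoint (fderiv ℝ (∇ g) (A x) (A h)) - A.adjoint (fderiv ℝ (∇ f) (A x) (A h))‖
        = ‖A.adjoint ((fderiv ℝ (∇ g) (A x) - fderiv ℝ (∇ f) (A x)) (A h))‖ := by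
          rw [← map_sub, sub_apply]
      _ ≤ ‖A.adjoint‖ * (δ * R') := A.adjoint.le_opNorm_of_le <|
          ContinuousLinearMap.le_of_opNorm_le_of_le _ (h₂ _ ⟨x, hx, rfl⟩).le (hR' _ ⟨h, hh, rfl⟩)
      _ < ε := by linarith
  · rw [hgrad hg, hgrad hf, ← map_sub]
    calc |⟪LJ (∇ g (A x) - ∇ f (A x)), x⟫|
        ≤ ‖LJ (∇ g (A x) - ∇ f (A x))‖ * ‖x‖ := abs_real_inner_le_norm _ _
      _ ≤ ‖LJ‖ * δ * R := by
          gcongr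
          exacts [LJ.le_opNorm_of_le (h₁ _ ⟨x, hx, rfl⟩).le, hR x hx]
      _ < ε := by linarith

end Closeness

section Galerkin

variable {H : Type*} [NormedAddCommGroup H] [InnerProductSpace ℝ H] {e : ℕ → H}

/-- The coordinate map `euclCoord e d` as a continuous linear map. -/
noncomputable def euclCoordL (e : ℕ → H) (d : ℕ) : H →L[ℝ] EuclideanSpace ℝ (Fin d) :=
  (EuclideanSpace.equiv (Fin d) ℝ).symm ∘L ContinuousLinearMap.pi fun i : Fin d => innerSL ℝ (e i)

theorem cyl_eq_comp_euclCoordL {d : ℕ} (f : EuclideanSpace ℝ (Fin d) → ℝ) :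
    cyl e f = f ∘ euclCoordL e d :=
  rfl

theorem norm_euclCoordL_le (he : Orthonormal ℝ e) (d : ℕ) : ‖euclCoordL e d‖ ≤ 1 := by
  refine ContinuousLinearMap.opNorm_le_bound _ zero_le_one fun x => ?_
  rw [one_mul, ← sq_le_sq₀ (norm_nonneg _) (norm_nonneg _), EuclideanSpace.norm_sq_eq]
  exact (he.comp _ Fin.val_injective).sum_inner_products_le x (s := Finset.univ)

variable [CompleteSpace H]

theorem adjoint_euclCoordL_apply {d : ℕ} (y : EuclideanSpace ℝ (Fin d)) :
    (euclCoordL e d).adjoint y = ∑ i, y i • e i := by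
  refine ext_inner_right ℝ fun x => ?_
  rw [ContinuousLinearMap.adjoint_inner_left, sum_inner]
  simp [euclCoordL, PiLp.inner_apply, inner_smul_left, mul_comm]

/-- The Galerkin projection `P_d`, which is the orthogonal projection onto the span of
`e 0, …, e (d - 1)` when `e` is orthonormal. It is encoded as coordinates followed by their adjoint,
so that `v ∘ P_d` is visibly cylindrical. -/
noncomputable def galerkinProj (e : ℕ → H) (d : ℕ) : H →L[ℝ] H :=
  (euclCoordL e d).adjoint ∘L euclCoordL e d

theorem galerkinProj_apply (d : ℕ) (x : H) :
    galerkinProj e d x = ∑ i ∈ Finset.range d, ⟪e i, x⟫ • e i := by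
  rw [Finset.sum_range]
  exact adjoint_euclCoordL_apply _

theorem isSelfAdjoint_galerkinProj (d : ℕ) : IsSelfAdjoint (galerkinProj e d) := by
  rw [ContinuousLinearMap.isSelfAdjoint_iff', galerkinProj, ContinuousLinearMap.adjoint_comp,
    ContinuousLinearMap.adjoint_adjoint]

theorem norm_galerkinProj_le (he : Orthonormal ℝ e) (d : ℕ) : ‖galerkinProj e d‖ ≤ 1 := by
  rw [galerkinProj, ContinuousLinearMap.norm_adjoint_comp_self]
  exact mul_le_one₀ (norm_euclCoordL_le he d) (norm_nonneg _) (norm_euclCoordL_le he d)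

theorem tendsto_galerkinProj (he : Orthonormal ℝ e)
    (htot : Dense (Submodule.span ℝ (Set.range e) : Set H)) (x : H) :
    Tendsto (galerkinProj e · x) atTop (𝓝 x) := by
  have hspan : ⊤ ≤ (Submodule.span ℝ (Set.range e)).topologicalClosure :=
    (Submodule.dense_iff_topologicalClosure_eq_top.1 htot).ge
  simpa [galerkinProj_apply, HilbertBasis.repr_apply_apply] using
    ((HilbertBasis.mk he hspan).hasSum_repr x).tendsto_sum_nat

end Galerkin

theorem hgno_universal_approximation_unbounded_compact_general
    {H : Type*} [NormedAddCommGroup H] [InnerProductSpace ℝ H] [CompleteSpace H]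
    {e : ℕ → H} (he : Orthonormal ℝ e)
    (htot : Dense (Submodule.span ℝ (Set.range e) : Set H))
    {N : ∀ d : ℕ, Set (EuclideanSpace ℝ (Fin d) → ℝ)}
    (hNsmooth : ∀ d : ℕ, ∀ f ∈ N d, ContDiff ℝ 2 f)
    (hNdense : ∀ (d : ℕ) (h : EuclideanSpace ℝ (Fin d) → ℝ), ContDiff ℝ 2 h →
      ∀ K : Set (EuclideanSpace ℝ (Fin d)), IsCompact K → ∀ ε > 0,
      ∃ f ∈ N d,
        (∀ y ∈ K, |h y - f y| < ε) ∧
        (∀ y ∈ K, ‖gradient h y - gradient f y‖ < ε) ∧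
        (∀ y ∈ K, ‖fderiv ℝ (gradient h) y - fderiv ℝ (gradient f) y‖ < ε))
    (L : H →ₗ[ℝ] H) {v : H → ℝ} (hv : ContDiff ℝ 2 v)
    {K K' : Set H} (hK : IsCompact K) (hK' : IsCompact K')
    (hcons : ∀ ε > 0, ∀ᶠ d in atTop, ∀ x ∈ K,
      |⟪L (gradient v x - galerkinProj e d (gradient v (galerkinProj e d x))), x⟫| < ε)
    {ε : ℝ} (hε : 0 < ε) :
    ∀ᶠ d in atTop, ∃ f ∈ N d, C2CloseOn L K K' ε v (cyl e f) := by
  have hproj : ∀ᶠ d in atTop, C2CloseOn L K K' (ε / 2) v (v ∘ galerkinProj e d) :=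
    eventually_c2CloseOn_comp isSelfAdjoint_galerkinProj (norm_galerkinProj_le he)
      (tendsto_galerkinProj he htot) hv hK hK' (half_pos hε) (hcons _ (half_pos hε))
  filter_upwards [hproj] with d hd
  let A := euclCoordL e d
  have hvJ : ContDiff ℝ 2 (v ∘ A.adjoint) := hv.comp A.adjoint.contDiff
  obtain ⟨δ, hδ, hpull⟩ :=
    exists_pos_c2CloseOn_comp L A hK.isBounded hK'.isBounded (half_pos hε)
  obtain ⟨f, hf, h₀, h₁, h₂⟩ := hNdense d _ hvJ (A '' K) (hK.image A.continuous) δ hδ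
  have hf' : C2CloseOn L K K' (ε / 2) (v ∘ galerkinProj e d) (cyl e f) :=
    hpull _ f hvJ (hNsmooth d f hf) h₀ h₁ h₂
  exact ⟨f, hf, add_halves ε ▸ hd.trans hf'⟩

/-- universal approximation under the action of an unbounded operator, compact
version (Theorem UAT_L(i)).  The (possibly unbounded) closed densely defined operator is
represented by a linear map `L` together with its domain `Ldom`, a submodule containing each
basis vector `e i` on which the graph of `L` is closed and which is dense in `H`. -/
theorem hgno_universal_approximation_unbounded_compact
    {H : Type*} [NormedAddCommGroup H] [InnerProductSpace ℝ H] [CompleteSpace H]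
    (e : ℕ → H) (he : Orthonormal ℝ e)
    (htot : Dense ((Submodule.span ℝ (Set.range e) : Submodule ℝ H) : Set H))
    (P : ℕ → H → H)
    (hP : ∀ (d : ℕ) (x : H), P d x = ∑ i ∈ Finset.range d, ⟪e i, x⟫ • e i)
    (N : ∀ d : ℕ, Set (EuclideanSpace ℝ (Fin d) → ℝ))
    (hNsmooth : ∀ d : ℕ, ∀ f ∈ N d, ContDiff ℝ 2 f)
    (hNdense : ∀ (d : ℕ) (h : EuclideanSpace ℝ (Fin d) → ℝ), ContDiff ℝ 2 h →
      ∀ K : Set (EuclideanSpace ℝ (Fin d)), IsCompact K → ∀ ε > 0,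
      ∃ f ∈ N d,
        (∀ y ∈ K, |h y - f y| < ε) ∧
        (∀ y ∈ K, ‖gradient h y - gradient f y‖ < ε) ∧
        (∀ y ∈ K, ‖fderiv ℝ (gradient h) y - fderiv ℝ (gradient f) y‖ < ε))
    (L : H →ₗ[ℝ] H) (Ldom : Submodule ℝ H)
    (hLdense : Dense (Ldom : Set H))
    (hLclosed : IsClosed {p : H × H | p.1 ∈ Ldom ∧ p.2 = L p.1})
    (heL : ∀ i : ℕ, e i ∈ Ldom)
    (v : H → ℝ) (hv : ContDiff ℝ 2 v)
    (hDvdom : ∀ x : H, gradient v x ∈ Ldom)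
    (hLDv : Continuous fun x : H => L (gradient v x))
    (K K' : Set H) (hK : IsCompact K) (hK' : IsCompact K')
    (hcons : ∀ ε > 0, ∃ D : ℕ, ∀ d ≥ D, ∀ x ∈ K,
      |⟪L (gradient v x - P d (gradient v (P d x))), x⟫| < ε)
    (ε : ℝ) (hε : 0 < ε) :
    ∃ (d : ℕ) (f : EuclideanSpace ℝ (Fin d) → ℝ), f ∈ N d ∧
      (∀ x ∈ K, |v x - cyl e f x| < ε) ∧
      (∀ x ∈ K, ‖gradient v x - gradient (cyl e f) x‖ < ε) ∧
      (∀ x ∈ K, ∀ h ∈ K',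
        ‖fderiv ℝ (gradient v) x h - fderiv ℝ (gradient (cyl e f)) x h‖ < ε) ∧
      (∀ x ∈ K, |⟪L (gradient v x - gradient (cyl e f) x), x⟫| < ε) := by
  obtain ⟨d, f, hf, hclose⟩ := (hgno_universal_approximation_unbounded_compact_general he htot
    hNsmooth hNdense L hv hK hK' (by simpa only [galerkinProj_apply, ← hP, eventually_atTop]
      using hcons) hε).exists
  exact ⟨d, f, hf, hclose.value, hclose.grad, hclose.hess, hclose.drift⟩
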